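/- arXiv:0710.4234 — 2 statements merged into one kernel-verified Lean document; each statement's English description precedes it below -/
import Mathlib

section
/- Suppose the centred parametrisation is partially tight in parameter (PTIP), i.e. there exists k > 0 such that limsup_{|θ|→∞} ∫_{{x : |x| > k}} π(x | θ) dx < 1. Then the marginal Θ-chain of the centred Gibbs sampler is uniformly ergodic: there exist a constant M < ∞ and r ∈ [0,1) such that for every θ₀ ∈ ℝ and every n ≥ 1, ‖Pⁿ(θ₀, ·) − Π‖_TV ≤ M·rⁿ. -/
open MeasureTheory Filter Set

noncomputable section

/-- Joint (unnormalised posterior) density `f_θ(x) = f₁(y - x) · f₂(x - θ)`. -/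
def fjoint (f₁ f₂ : ℝ → ℝ) (y θ x : ℝ) : ℝ := f₁ (y - x) * f₂ (x - θ)

/-- Normalising constant `c_θ = ∫ f_θ(x) dx`. -/
def cnorm (f₁ f₂ : ℝ → ℝ) (y θ : ℝ) : ℝ := ∫ x, fjoint f₁ f₂ y θ x

/-- Conditional posterior density `π(x | θ) = f_θ(x)/c_θ`. -/
def post (f₁ f₂ : ℝ → ℝ) (y θ x : ℝ) : ℝ := fjoint f₁ f₂ y θ x / cnorm f₁ f₂ y θ

/-- One-step transition density of the marginal Θ-chain of the centred Gibbs sampler: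
`p(θ₀, θ₁) = (1/c_{θ₀}) ∫ f₂(x - θ₁) f_{θ₀}(x) dx`. -/
def gibbsTrans (f₁ f₂ : ℝ → ℝ) (y θ₀ θ₁ : ℝ) : ℝ :=
  (1 / cnorm f₁ f₂ y θ₀) * ∫ x, f₂ (x - θ₁) * fjoint f₁ f₂ y θ₀ x

/-- `n`-step transition density (for `n ≥ 1`; the value at `n = 0` is unused). -/
def gibbsTransN (f₁ f₂ : ℝ → ℝ) (y : ℝ) : ℕ → ℝ → ℝ → ℝ
  | 0, _, _ => 0
  | 1, θ₀, θ₁ => gibbsTrans f₁ f₂ y θ₀ θ₁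
  | (n + 2), θ₀, θ₁ => ∫ u, gibbsTransN f₁ f₂ y (n + 1) θ₀ u * gibbsTrans f₁ f₂ y u θ₁

/-!
Doeblin's argument. Both half-steps of the sampler, `θ ↦ X ∼ π(· | θ)` and `x ↦ Θ ∼ f₂(x - ·)`, are
Markov kernels with a density, and the transition density is their composition. PTIP together with
compactness puts mass at least `ε` on a fixed compact set of `x`, uniformly in `θ`; as `f₂` is
bounded below on compact sets, `p(θ₀, ·)` dominates a positive constant on `[0, 1]`, uniformly in
`θ₀`. Subtracting such a common minorant of mass `δ` leaves a kernel of mass `1 - δ` that acts in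
the same way on functions of zero mean, so each step contracts the `L¹` distance to the reversible
density `c_θ` by the factor `1 - δ`.
-/

section Integral

variable {α : Type*} [MeasurableSpace α] {μ : Measure α} {f g φ : α → ℝ}

lemma setIntegral_mul_le_integral_mul {m : ℝ} {B : Set α} (hf0 : ∀ a, 0 ≤ f a)
    (hf : Integrable f μ) (hg0 : ∀ a, 0 ≤ g a) (hfg : Integrable (fun a => f a * g a) μ)
    (hB : MeasurableSet B) (hm : ∀ a ∈ B, m ≤ g a) :
    (∫ a in B, f a ∂μ) * m ≤ ∫ a, f a * g a ∂μ := by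
  rw [← integral_mul_const]
  calc ∫ a in B, f a * m ∂μ ≤ ∫ a in B, f a * g a ∂μ :=
        setIntegral_mono_on (hf.mul_const m).integrableOn hfg.integrableOn hB
          fun a ha => mul_le_mul_of_nonneg_left (hm a ha) (hf0 a)
    _ ≤ ∫ a, f a * g a ∂μ :=
        setIntegral_le_integral hfg (.of_forall fun a => mul_nonneg (hf0 a) (hg0 a))

lemma integral_abs_sub_le_of_common_minorant (hf : Integrable f μ)
    (hg : Integrable g μ) (hφ : Integrable φ μ) (hφf : φ ≤ᵐ[μ] f) (hφg : φ ≤ᵐ[μ] g) :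
    ∫ a, |f a - g a| ∂μ ≤ (∫ a, f a ∂μ - ∫ a, φ a ∂μ) + (∫ a, g a ∂μ - ∫ a, φ a ∂μ) := by
  rw [← integral_sub' hf hφ, ← integral_sub' hg hφ, ← integral_add' (hf.sub hφ) (hg.sub hφ)]
  refine integral_mono_ae (hf.sub hg).abs ((hf.sub hφ).add (hg.sub hφ)) ?_
  filter_upwards [hφf, hφg] with a hfa hga
  simp only [Pi.add_apply, Pi.sub_apply]
  exact abs_le.2 ⟨by linarith, by linarith⟩

end Integral

section KernelDensity

variable {α β γ : Type*} [MeasurableSpace α] [MeasurableSpace β] [MeasurableSpace γ]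
  {μ : Measure α} {ν : Measure β} {ρ : Measure γ}

/-- `p` is the density with respect to `ν` of a kernel from `α` to `β` all of whose fibres have mass
`m`; for `m = 1` this is a Markov transition density. The measure `μ` on the source enters only
through joint measurability, which is required up to null sets. -/
structure IsKernelDensity (μ : Measure α) (ν : Measure β) (m : ℝ) (p : α → β → ℝ) : Prop where
  aestronglyMeasurable : AEStronglyMeasurable (Function.uncurry p) (μ.prod ν)
  nonneg : ∀ a b, 0 ≤ p a b
  integrable : ∀ a, Integrable (p a) ν
  integral_eq : ∀ a, ∫ b, p a b ∂ν = m

/-- The action of a kernel density `p` on densities: the law obtained from the density `h` with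
respect to `μ` by one step of the kernel has density `pushDensity μ p h`. -/
def pushDensity (μ : Measure α) (p : α → β → ℝ) (h : α → ℝ) (b : β) : ℝ :=
  ∫ a, h a * p a b ∂μ

namespace IsKernelDensity

variable {m m' : ℝ} {p : α → β → ℝ} {q : β → γ → ℝ} {h : α → ℝ} {φ : β → ℝ}

lemma mass_nonneg [Nonempty α] (hp : IsKernelDensity μ ν m p) : 0 ≤ m := by
  obtain ⟨a⟩ := ‹Nonempty α›
  rw [← hp.integral_eq a]
  exact integral_nonneg (hp.nonneg a)

lemma sub_minorant [SFinite ν] (hp : IsKernelDensity μ ν m p) (hφ : Integrable φ ν)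
    (hφp : ∀ a b, φ b ≤ p a b) :
    IsKernelDensity μ ν (m - ∫ b, φ b ∂ν) (fun a b => p a b - φ b) where
  aestronglyMeasurable := hp.aestronglyMeasurable.sub hφ.aestronglyMeasurable.comp_snd
  nonneg a b := sub_nonneg.2 (hφp a b)
  integrable a := (hp.integrable a).sub hφ
  integral_eq a := by rw [integral_sub (hp.integrable a) hφ, hp.integral_eq]

lemma integrable_uncurry_mul [SFinite ν] (hp : IsKernelDensity μ ν m p) (hh : Integrable h μ) :
    Integrable (Function.uncurry fun a b => h a * p a b) (μ.prod ν) := by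
  have hmeas : AEStronglyMeasurable (Function.uncurry fun a b => h a * p a b) (μ.prod ν) :=
    hh.aestronglyMeasurable.comp_fst.mul hp.aestronglyMeasurable
  have hnorm : ∀ a, ∫ b, ‖h a * p a b‖ ∂ν = ‖h a‖ * m := fun a => by
    simp only [norm_mul, Real.norm_of_nonneg (hp.nonneg _ _), integral_const_mul, hp.integral_eq]
  refine (integrable_prod_iff hmeas).2 ⟨.of_forall fun a => (hp.integrable a).const_mul (h a), ?_⟩
  simpa only [Function.uncurry_apply_pair, hnorm] using hh.norm.mul_const m

variable [SFinite μ] [SFinite ν]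

lemma ae_integrable_mul (hp : IsKernelDensity μ ν m p) (hh : Integrable h μ) :
    ∀ᵐ b ∂ν, Integrable (fun a => h a * p a b) μ :=
  (hp.integrable_uncurry_mul hh).prod_left_ae

lemma integrable_pushDensity (hp : IsKernelDensity μ ν m p) (hh : Integrable h μ) :
    Integrable (pushDensity μ p h) ν :=
  (hp.integrable_uncurry_mul hh).integral_prod_right

lemma integral_pushDensity (hp : IsKernelDensity μ ν m p) (hh : Integrable h μ) :
    ∫ b, pushDensity μ p h b ∂ν = (∫ a, h a ∂μ) * m := by
  simp only [pushDensity]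
  rw [← integral_integral_swap (hp.integrable_uncurry_mul hh)]
  simp only [integral_const_mul, hp.integral_eq, integral_mul_const]

lemma integral_abs_pushDensity_le (hp : IsKernelDensity μ ν m p) (hh : Integrable h μ) :
    ∫ b, |pushDensity μ p h b| ∂ν ≤ (∫ a, |h a| ∂μ) * m := by
  rw [← hp.integral_pushDensity hh.abs]
  refine integral_mono (hp.integrable_pushDensity hh).abs (hp.integrable_pushDensity hh.abs)
    fun b => abs_integral_le_integral_abs.trans_eq ?_
  simp only [pushDensity, abs_mul, abs_of_nonneg (hp.nonneg _ _)]

lemma pushDensity_sub_ae_eq {g : α → ℝ} (hp : IsKernelDensity μ ν m p) (hg : Integrable g μ)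
    (hh : Integrable h μ) :
    pushDensity μ p (fun a => g a - h a) =ᵐ[ν]
      fun b => pushDensity μ p g b - pushDensity μ p h b := by
  filter_upwards [hp.ae_integrable_mul hg, hp.ae_integrable_mul hh] with b hgb hhb
  simp only [pushDensity, sub_mul]
  exact integral_sub hgb hhb

lemma pushDensity_sub_minorant_ae_eq (hp : IsKernelDensity μ ν m p) (hh : Integrable h μ)
    (hh0 : ∫ a, h a ∂μ = 0) :
    pushDensity μ (fun a b => p a b - φ b) h =ᵐ[ν] pushDensity μ p h := by
  filter_upwards [hp.ae_integrable_mul hh] with b hb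
  simp only [pushDensity, mul_sub]
  rw [integral_sub hb (hh.mul_const _), integral_mul_const, hh0, zero_mul, sub_zero]

lemma integral_abs_pushDensity_le_of_minorant (hp : IsKernelDensity μ ν m p)
    (hφ : Integrable φ ν) (hφp : ∀ a b, φ b ≤ p a b) (hh : Integrable h μ)
    (hh0 : ∫ a, h a ∂μ = 0) :
    ∫ b, |pushDensity μ p h b| ∂ν ≤ (∫ a, |h a| ∂μ) * (m - ∫ b, φ b ∂ν) := by
  have hpush := hp.pushDensity_sub_minorant_ae_eq (φ := φ) hh hh0
  refine (integral_congr_ae (hpush.mono fun b hb => ?_)).trans_le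
    ((hp.sub_minorant hφ hφp).integral_abs_pushDensity_le hh)
  exact congrArg abs hb.symm

lemma minorant_le_pushDensity (hp : IsKernelDensity μ ν m p) (hφp : ∀ a b, φ b ≤ p a b)
    (hh : ∀ a, 0 ≤ h a) (hh1 : ∫ a, h a ∂μ = 1) : φ ≤ᵐ[ν] pushDensity μ p h := by
  have hhi : Integrable h μ := integrable_of_integral_eq_one hh1
  filter_upwards [hp.ae_integrable_mul hhi] with b hb
  calc φ b = ∫ a, h a * φ b ∂μ := by rw [integral_mul_const, hh1, one_mul]
    _ ≤ pushDensity μ p h b :=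
      integral_mono (hhi.mul_const _) hb fun a => mul_le_mul_of_nonneg_left (hφp a b) (hh a)

lemma comp [SFinite ρ] (hp : IsKernelDensity μ ν m p) (hq : IsKernelDensity ν ρ m' q) :
    IsKernelDensity μ ρ (m * m') (fun a => pushDensity ν q (p a)) where
  aestronglyMeasurable := by
    have hp' : AEStronglyMeasurable (fun z : (α × γ) × β => p z.1.1 z.2) ((μ.prod ρ).prod ν) :=
      hp.aestronglyMeasurable.comp_quasiMeasurePreserving
        (QuasiMeasurePreserving.prodMap Measure.quasiMeasurePreserving_fst (.id ν))
    have hq' : AEStronglyMeasurable (fun z : (α × γ) × β => q z.2 z.1.2) ((μ.prod ρ).prod ν) :=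
      hq.aestronglyMeasurable.prod_swap.comp_quasiMeasurePreserving
        (QuasiMeasurePreserving.prodMap Measure.quasiMeasurePreserving_snd (.id ν))
    exact (hp'.mul hq').integral_prod_right'
  nonneg a c := integral_nonneg fun b => mul_nonneg (hp.nonneg a b) (hq.nonneg b c)
  integrable a := hq.integrable_pushDensity (hp.integrable a)
  integral_eq a := by rw [hq.integral_pushDensity (hp.integrable a), hp.integral_eq]

end IsKernelDensity

end KernelDensity

section Doeblin

variable {α : Type*} [MeasurableSpace α] {μ : Measure α} {p : α → α → ℝ} {φ π g : α → ℝ}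

namespace IsKernelDensity

lemma pushDensity_eq_self_of_reversible (hp : IsKernelDensity μ μ 1 p)
    (hrev : ∀ a b, π a * p a b = π b * p b a) : pushDensity μ p π = π := by
  funext b
  simp only [pushDensity, hrev _ b, integral_const_mul, hp.integral_eq, mul_one]

variable [SFinite μ]

lemma integrable_iterate_pushDensity {m : ℝ} (hp : IsKernelDensity μ μ m p) (hg : Integrable g μ)
    (n : ℕ) : Integrable ((pushDensity μ p)^[n] g) μ :=
  Function.Iterate.rec (fun h => Integrable h μ) hg (fun _ => hp.integrable_pushDensity) n

lemma integral_iterate_pushDensity (hp : IsKernelDensity μ μ 1 p) (hg : Integrable g μ) (n : ℕ) :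
    ∫ a, (pushDensity μ p)^[n] g a ∂μ = ∫ a, g a ∂μ := by
  induction n with
  | zero => rfl
  | succ n ih =>
    rw [Function.iterate_succ_apply',
      hp.integral_pushDensity (hp.integrable_iterate_pushDensity hg n), mul_one, ih]

lemma integral_abs_pushDensity_sub_le (hp : IsKernelDensity μ μ 1 p) (hφ : Integrable φ μ)
    (hφp : ∀ a b, φ b ≤ p a b) (hπ : Integrable π μ) (hinv : pushDensity μ p π = π)
    (hg : Integrable g μ) (hgπ : ∫ a, g a ∂μ = ∫ a, π a ∂μ) :
    ∫ a, |pushDensity μ p g a - π a| ∂μ ≤ (∫ a, |g a - π a| ∂μ) * (1 - ∫ a, φ a ∂μ) := by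
  have hpush : pushDensity μ p (fun a => g a - π a) =ᵐ[μ] fun a => pushDensity μ p g a - π a := by
    simpa only [hinv] using hp.pushDensity_sub_ae_eq hg hπ
  have hmean : ∫ a, (g a - π a) ∂μ = 0 := by rw [integral_sub hg hπ, hgπ, sub_self]
  refine (integral_congr_ae (hpush.mono fun a ha => ?_)).trans_le
    (hp.integral_abs_pushDensity_le_of_minorant hφ hφp (hg.sub hπ) hmean)
  exact congrArg abs ha.symm

lemma integral_abs_iterate_pushDensity_sub_le (hp : IsKernelDensity μ μ 1 p)
    (hφ : Integrable φ μ) (hφp : ∀ a b, φ b ≤ p a b) (hπ : Integrable π μ)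
    (hinv : pushDensity μ p π = π) (hg : Integrable g μ) (hgπ : ∫ a, g a ∂μ = ∫ a, π a ∂μ)
    (n : ℕ) :
    ∫ a, |(pushDensity μ p)^[n] g a - π a| ∂μ ≤
      (∫ a, |g a - π a| ∂μ) * (1 - ∫ a, φ a ∂μ) ^ n := by
  induction n with
  | zero => simp
  | succ n ih =>
    rcases isEmpty_or_nonempty α with hα | hα
    · simp [integral_of_isEmpty]
    have hr : 0 ≤ 1 - ∫ a, φ a ∂μ := (hp.sub_minorant hφ hφp).mass_nonneg
    have hint := hp.integral_iterate_pushDensity hg n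
    rw [Function.iterate_succ_apply', pow_succ, ← mul_assoc]
    exact (hp.integral_abs_pushDensity_sub_le hφ hφp hπ hinv
      (hp.integrable_iterate_pushDensity hg n) (hint.trans hgπ)).trans
      (mul_le_mul_of_nonneg_right ih hr)

theorem uniform_ergodicity_of_minorant (hp : IsKernelDensity μ μ 1 p) (hφ : Integrable φ μ)
    (hφp : ∀ a b, φ b ≤ p a b) (hπ0 : ∀ a, 0 ≤ π a) (hπ1 : ∫ a, π a ∂μ = 1)
    (hinv : pushDensity μ p π = π) (a₀ : α) (n : ℕ) :
    ∫ a, |(pushDensity μ p)^[n] (p a₀) a - π a| ∂μ ≤ 2 * (1 - ∫ a, φ a ∂μ) ^ (n + 1) := by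
  have hr : 0 ≤ 1 - ∫ a, φ a ∂μ :=
    have : Nonempty α := ⟨a₀⟩
    (hp.sub_minorant hφ hφp).mass_nonneg
  have hπ : Integrable π μ := integrable_of_integral_eq_one hπ1
  have hφπ : φ ≤ᵐ[μ] π := by
    simpa only [hinv] using hp.minorant_le_pushDensity hφp hπ0 hπ1
  have hfirst : ∫ a, |p a₀ a - π a| ∂μ ≤ 2 * (1 - ∫ a, φ a ∂μ) := by
    have := integral_abs_sub_le_of_common_minorant (hp.integrable a₀) hπ hφ
      (.of_forall (hφp a₀)) hφπ
    rwa [hp.integral_eq, hπ1, ← two_mul] at this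
  calc ∫ a, |(pushDensity μ p)^[n] (p a₀) a - π a| ∂μ
      ≤ (∫ a, |p a₀ a - π a| ∂μ) * (1 - ∫ a, φ a ∂μ) ^ n :=
        hp.integral_abs_iterate_pushDensity_sub_le hφ hφp hπ hinv (hp.integrable a₀)
          ((hp.integral_eq a₀).trans hπ1.symm) n
    _ ≤ 2 * (1 - ∫ a, φ a ∂μ) * (1 - ∫ a, φ a ∂μ) ^ n := by gcongr
    _ = 2 * (1 - ∫ a, φ a ∂μ) ^ (n + 1) := by ring

theorem uniform_ergodicity_of_forall_mem_le (hp : IsKernelDensity μ μ 1 p) {S : Set α}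
    (hS : MeasurableSet S) (hS0 : μ S ≠ 0) (hStop : μ S ≠ ⊤) {δ : ℝ} (hδ : 0 < δ)
    (hδp : ∀ a, ∀ b ∈ S, δ ≤ p a b) (hπ0 : ∀ a, 0 ≤ π a) (hπ1 : ∫ a, π a ∂μ = 1)
    (hinv : pushDensity μ p π = π) :
    ∃ r : ℝ, 0 ≤ r ∧ r < 1 ∧
      ∀ a₀ n, ∫ a, |(pushDensity μ p)^[n] (p a₀) a - π a| ∂μ ≤ 2 * r ^ (n + 1) := by
  have hφ : Integrable (S.indicator fun _ => δ) μ :=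
    (integrable_indicator_iff hS).2 (integrableOn_const hStop)
  have hφp : ∀ a b, S.indicator (fun _ => δ) b ≤ p a b := fun a =>
    indicator_le' (hδp a) fun b _ => hp.nonneg a b
  have hmass : 0 < ∫ a, S.indicator (fun _ => δ) a ∂μ := by
    rw [integral_indicator_const δ hS, smul_eq_mul]
    exact mul_pos (ENNReal.toReal_pos hS0 hStop) hδ
  have : Nonempty α := (nonempty_of_measure_ne_zero hS0).to_type
  exact ⟨1 - ∫ a, S.indicator (fun _ => δ) a ∂μ, (hp.sub_minorant hφ hφp).mass_nonneg,
    sub_lt_self 1 hmass, hp.uniform_ergodicity_of_minorant hφ hφp hπ0 hπ1 hinv⟩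

end IsKernelDensity

end Doeblin

section Translation

variable {G : Type*} [AddGroup G]

lemma isKernelDensity_comp_sub [MeasurableSpace G] [MeasurableAdd₂ G] [MeasurableNeg G]
    {μ : Measure G} [SFinite μ] [μ.IsAddLeftInvariant] [μ.IsNegInvariant] {f : G → ℝ}
    (hf0 : ∀ t, 0 ≤ f t) (hf : Integrable f μ) :
    IsKernelDensity μ μ (∫ t, f t ∂μ) (fun x t => f (x - t)) where
  aestronglyMeasurable :=
    hf.aestronglyMeasurable.comp_quasiMeasurePreserving (quasiMeasurePreserving_sub μ μ)
  nonneg _ _ := hf0 _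
  integrable x := hf.comp_sub_left x
  integral_eq x := integral_sub_left_eq_self f μ x

lemma integrable_mul_comp_sub [MeasurableSpace G] [MeasurableAdd G] {μ : Measure G}
    [μ.IsAddRightInvariant] {f h : G → ℝ} {M : ℝ} (hh : Integrable h μ)
    (hf : AEStronglyMeasurable f μ) (hM : ∀ t, |f t| ≤ M) (t : G) :
    Integrable (fun x => h x * f (x - t)) μ :=
  hh.mul_bdd (hf.comp_quasiMeasurePreserving
    (measurePreserving_sub_right μ t).quasiMeasurePreserving) (.of_forall fun x => hM (x - t))

lemma exists_pos_forall_le_comp_sub [TopologicalSpace G] [ContinuousSub G] {f : G → ℝ}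
    (hf : Continuous f) (hf0 : ∀ t, 0 < f t) {S T : Set G} (hS : IsCompact S) (hT : IsCompact T) :
    ∃ m > 0, ∀ x ∈ S, ∀ t ∈ T, m ≤ f (x - t) := by
  obtain ⟨m, hm, hle⟩ := (hS.prod hT).exists_forall_le' (f := fun z => f (z.1 - z.2))
    (by fun_prop) fun z _ => hf0 _
  exact ⟨m, hm, fun x hx t ht => hle (x, t) ⟨hx, ht⟩⟩

end Translation

section Gibbs

variable {f₁ f₂ : ℝ → ℝ} {y M : ℝ}

lemma fjoint_nonneg (hf₁ : ∀ t, 0 ≤ f₁ t) (hf₂ : ∀ t, 0 ≤ f₂ t) (θ x : ℝ) :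
    0 ≤ fjoint f₁ f₂ y θ x :=
  mul_nonneg (hf₁ _) (hf₂ _)

lemma fjoint_le (hf₁ : ∀ t, 0 ≤ f₁ t) (hM : ∀ t, f₂ t ≤ M) (θ x : ℝ) :
    fjoint f₁ f₂ y θ x ≤ f₁ (y - x) * M :=
  mul_le_mul_of_nonneg_left (hM _) (hf₁ _)

lemma integrable_fjoint (hf₁ : Integrable f₁) (hf₂ : AEStronglyMeasurable f₂)
    (hf₂0 : ∀ t, 0 ≤ f₂ t) (hM : ∀ t, f₂ t ≤ M) (θ : ℝ) : Integrable (fjoint f₁ f₂ y θ) :=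
  integrable_mul_comp_sub (hf₁.comp_sub_left y) hf₂
    (fun t => (abs_of_nonneg (hf₂0 t)).trans_le (hM t)) θ

lemma cnorm_eq_pushDensity :
    cnorm f₁ f₂ y = pushDensity volume (fun x θ => f₂ (x - θ)) (fun x => f₁ (y - x)) :=
  rfl

lemma integrable_cnorm (hf₁ : Integrable f₁) (hf₂ : Integrable f₂) (hf₂0 : ∀ t, 0 ≤ f₂ t) :
    Integrable (cnorm f₁ f₂ y) :=
  (isKernelDensity_comp_sub hf₂0 hf₂).integrable_pushDensity (hf₁.comp_sub_left y)

lemma integral_cnorm (hf₁ : Integrable f₁) (hf₂ : Integrable f₂) (hf₂0 : ∀ t, 0 ≤ f₂ t) :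
    ∫ θ, cnorm f₁ f₂ y θ = (∫ t, f₁ t) * ∫ t, f₂ t := by
  rw [cnorm_eq_pushDensity,
    (isKernelDensity_comp_sub hf₂0 hf₂).integral_pushDensity (hf₁.comp_sub_left y),
    integral_sub_left_eq_self f₁ volume y]

lemma cnorm_pos (hf₁0 : ∀ t, 0 ≤ f₁ t) (hf₁ : 0 < ∫ t, f₁ t) (hf₂ : AEStronglyMeasurable f₂)
    (hf₂0 : ∀ t, 0 < f₂ t) (hM : ∀ t, f₂ t ≤ M) (θ : ℝ) : 0 < cnorm f₁ f₂ y θ := by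
  have hf₁i : Integrable f₁ := .of_integral_ne_zero hf₁.ne'
  have hsupp : Function.support (fjoint f₁ f₂ y θ) = Function.support fun x => f₁ (y - x) := by
    ext x
    simp [fjoint, (hf₂0 _).ne']
  rw [← integral_sub_left_eq_self f₁ volume y,
    integral_pos_iff_support_of_nonneg (fun x => hf₁0 _) (hf₁i.comp_sub_left y)] at hf₁
  rw [cnorm, integral_pos_iff_support_of_nonneg (fjoint_nonneg hf₁0 (fun t => (hf₂0 t).le) θ)
    (integrable_fjoint hf₁i hf₂ (fun t => (hf₂0 t).le) hM θ)]
  rwa [hsupp]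

lemma cnorm_le (hf₁0 : ∀ t, 0 ≤ f₁ t) (hf₁ : Integrable f₁) (hf₂ : AEStronglyMeasurable f₂)
    (hf₂0 : ∀ t, 0 ≤ f₂ t) (hM : ∀ t, f₂ t ≤ M) (θ : ℝ) :
    cnorm f₁ f₂ y θ ≤ (∫ t, f₁ t) * M := by
  rw [← integral_sub_left_eq_self f₁ volume y, ← integral_mul_const]
  exact integral_mono (integrable_fjoint hf₁ hf₂ hf₂0 hM θ) ((hf₁.comp_sub_left y).mul_const M)
    (fjoint_le hf₁0 hM θ)

lemma isKernelDensity_post (hf₁0 : ∀ t, 0 ≤ f₁ t) (hf₁ : 0 < ∫ t, f₁ t) (hf₂ : Integrable f₂)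
    (hf₂0 : ∀ t, 0 < f₂ t) (hM : ∀ t, f₂ t ≤ M) :
    IsKernelDensity volume volume 1 (post f₁ f₂ y) := by
  have hf₁i : Integrable f₁ := .of_integral_ne_zero hf₁.ne'
  have hf₂0' : ∀ t, 0 ≤ f₂ t := fun t => (hf₂0 t).le
  have hc : ∀ θ, 0 < cnorm f₁ f₂ y θ := cnorm_pos hf₁0 hf₁ hf₂.aestronglyMeasurable hf₂0 hM
  refine ⟨?_, fun θ x => div_nonneg (fjoint_nonneg hf₁0 hf₂0' θ x) (hc θ).le, fun θ =>
    (integrable_fjoint hf₁i hf₂.aestronglyMeasurable hf₂0' hM θ).div_const _, fun θ => ?_⟩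
  · have hmeas₁ : AEStronglyMeasurable (fun z : ℝ × ℝ => f₁ (y - z.2)) :=
      (hf₁i.comp_sub_left y).aestronglyMeasurable.comp_snd
    have hmeas₂ : AEStronglyMeasurable (fun z : ℝ × ℝ => f₂ (z.2 - z.1)) :=
      (isKernelDensity_comp_sub hf₂0' hf₂).aestronglyMeasurable.prod_swap
    have hmeas_c : AEStronglyMeasurable (fun z : ℝ × ℝ => cnorm f₁ f₂ y z.1) :=
      (integrable_cnorm hf₁i hf₂ hf₂0').aestronglyMeasurable.comp_fst
    exact (hmeas₁.mul hmeas₂).div₀ hmeas_c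
  · simp only [post, integral_div]
    exact div_self (hc θ).ne'

lemma gibbsTrans_eq_pushDensity_post :
    gibbsTrans f₁ f₂ y =
      fun θ => pushDensity volume (fun x t => f₂ (x - t)) (post f₁ f₂ y θ) := by
  funext θ t
  rw [gibbsTrans, pushDensity, ← integral_const_mul]
  congr 1 with x
  rw [post]
  ring

lemma isKernelDensity_gibbsTrans (hf₁0 : ∀ t, 0 ≤ f₁ t) (hf₁ : 0 < ∫ t, f₁ t)
    (hf₂0 : ∀ t, 0 < f₂ t) (hf₂1 : ∫ t, f₂ t = 1) (hM : ∀ t, f₂ t ≤ M) :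
    IsKernelDensity volume volume 1 (gibbsTrans f₁ f₂ y) := by
  have hf₂ : Integrable f₂ := integrable_of_integral_eq_one hf₂1
  have hstep := isKernelDensity_comp_sub (fun t => (hf₂0 t).le) hf₂
  rw [gibbsTrans_eq_pushDensity_post]
  simpa only [hf₂1, one_mul] using (isKernelDensity_post hf₁0 hf₁ hf₂ hf₂0 hM).comp hstep

lemma cnorm_mul_gibbsTrans_comm (hc : ∀ θ, cnorm f₁ f₂ y θ ≠ 0) (θ t : ℝ) :
    cnorm f₁ f₂ y θ * gibbsTrans f₁ f₂ y θ t = cnorm f₁ f₂ y t * gibbsTrans f₁ f₂ y t θ := by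
  simp only [gibbsTrans, ← mul_assoc, mul_one_div_cancel (hc _), one_mul]
  congr 1 with x
  simp only [fjoint]
  ring

lemma gibbsTransN_succ_eq_iterate (n : ℕ) (θ₀ : ℝ) :
    gibbsTransN f₁ f₂ y (n + 1) θ₀ =
      (pushDensity volume (gibbsTrans f₁ f₂ y))^[n] (gibbsTrans f₁ f₂ y θ₀) := by
  induction n with
  | zero => rfl
  | succ n ih =>
    rw [Function.iterate_succ_apply', ← ih]
    rfl

lemma setIntegral_pos_of_setIntegral_post_pos (hf₁0 : ∀ t, 0 ≤ f₁ t) (hf₁ : Integrable f₁)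
    {θ : ℝ} {B : Set ℝ} (hpost : 0 < ∫ x in B, post f₁ f₂ y θ x) :
    0 < ∫ x in B, f₁ (y - x) := by
  refine (integral_nonneg fun x => hf₁0 _).lt_of_ne' fun hzero => hpost.ne' ?_
  rw [integral_eq_zero_iff_of_nonneg (fun x => hf₁0 _) (hf₁.comp_sub_left y).integrableOn] at hzero
  refine integral_eq_zero_of_ae (hzero.mono fun x hx => ?_)
  simp only [Pi.zero_apply] at hx
  simp [post, fjoint, hx]

lemma exists_pos_forall_mem_le_setIntegral_post (hf₁0 : ∀ t, 0 ≤ f₁ t) (hf₁ : 0 < ∫ t, f₁ t)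
    (hf₂c : Continuous f₂) (hf₂ : Integrable f₂) (hf₂0 : ∀ t, 0 < f₂ t) (hM : ∀ t, f₂ t ≤ M)
    {B K : Set ℝ} (hB : IsCompact B) (hK : IsCompact K) (hmass : 0 < ∫ x in B, f₁ (y - x)) :
    ∃ ε > 0, ∀ θ ∈ K, ε ≤ ∫ x in B, post f₁ f₂ y θ x := by
  have hf₁i : Integrable f₁ := .of_integral_ne_zero hf₁.ne'
  have hc := cnorm_pos (y := y) hf₁0 hf₁ hf₂.aestronglyMeasurable hf₂0 hM
  have hcM := cnorm_le (y := y) hf₁0 hf₁i hf₂.aestronglyMeasurable (fun t => (hf₂0 t).le) hM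
  have hM0 : 0 < M := (hf₂0 0).trans_le (hM 0)
  obtain ⟨m, hm0, hm⟩ := exists_pos_forall_le_comp_sub hf₂c hf₂0 hB hK
  refine ⟨(∫ x in B, f₁ (y - x)) * m / ((∫ t, f₁ t) * M), by positivity, fun θ hθ => ?_⟩
  rw [← integral_mul_const, ← integral_div]
  refine setIntegral_mono_on (((hf₁i.comp_sub_left y).mul_const m).div_const _).integrableOn
    ((isKernelDensity_post hf₁0 hf₁ hf₂ hf₂0 hM).integrable θ).integrableOn hB.measurableSet
    fun x hx => ?_
  have hjoint : f₁ (y - x) * m ≤ fjoint f₁ f₂ y θ x :=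
    mul_le_mul_of_nonneg_left (hm x hx θ hθ) (hf₁0 _)
  exact div_le_div₀ (fjoint_nonneg hf₁0 (fun t => (hf₂0 t).le) θ x) hjoint (hc θ) (hcM θ)

lemma exists_pos_forall_le_setIntegral_post (hf₁0 : ∀ t, 0 ≤ f₁ t) (hf₁ : 0 < ∫ t, f₁ t)
    (hf₂c : Continuous f₂) (hf₂ : Integrable f₂) (hf₂0 : ∀ t, 0 < f₂ t) (hM : ∀ t, f₂ t ≤ M)
    {B : Set ℝ} (hB : IsCompact B)
    (hlim : limsup (fun θ => ∫ x in Bᶜ, post f₁ f₂ y θ x) (cocompact ℝ) < 1) :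
    ∃ ε > 0, ∀ θ, ε ≤ ∫ x in B, post f₁ f₂ y θ x := by
  have hpost : IsKernelDensity volume volume 1 (post f₁ f₂ y) :=
    isKernelDensity_post hf₁0 hf₁ hf₂ hf₂0 hM
  have hsplit : ∀ θ, (∫ x in B, post f₁ f₂ y θ x) + ∫ x in Bᶜ, post f₁ f₂ y θ x = 1 := fun θ => by
    rw [integral_add_compl hB.measurableSet (hpost.integrable θ), hpost.integral_eq]
  have hbdd : IsBoundedUnder (· ≤ ·) (cocompact ℝ) fun θ => ∫ x in Bᶜ, post f₁ f₂ y θ x :=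
    isBoundedUnder_of ⟨1, fun θ => (setIntegral_le_integral (hpost.integrable θ)
      (.of_forall (hpost.nonneg θ))).trans_eq (hpost.integral_eq θ)⟩
  obtain ⟨b, hlimb, hb1⟩ := exists_between hlim
  have htail : ∀ᶠ θ in cocompact ℝ, 1 - b ≤ ∫ x in B, post f₁ f₂ y θ x := by
    filter_upwards [eventually_lt_of_limsup_lt hlimb hbdd] with θ hθ
    linarith [hsplit θ]
  have hmass : 0 < ∫ x in B, f₁ (y - x) := by
    obtain ⟨θ, hθ⟩ := htail.exists
    exact setIntegral_pos_of_setIntegral_post_pos hf₁0 (.of_integral_ne_zero hf₁.ne')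
      ((sub_pos.2 hb1).trans_le hθ)
  obtain ⟨K, hK, hKtail⟩ := mem_cocompact.1 htail
  obtain ⟨ε, hε, hεK⟩ :=
    exists_pos_forall_mem_le_setIntegral_post hf₁0 hf₁ hf₂c hf₂ hf₂0 hM hB hK hmass
  refine ⟨min ε (1 - b), lt_min hε (sub_pos.2 hb1), fun θ => ?_⟩
  by_cases hθ : θ ∈ K
  · exact (min_le_left _ _).trans (hεK θ hθ)
  · exact (min_le_right _ _).trans (hKtail hθ)

lemma exists_pos_forall_le_gibbsTrans (hf₁0 : ∀ t, 0 ≤ f₁ t) (hf₁ : 0 < ∫ t, f₁ t)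
    (hf₂c : Continuous f₂) (hf₂ : Integrable f₂) (hf₂0 : ∀ t, 0 < f₂ t) (hM : ∀ t, f₂ t ≤ M)
    {B S : Set ℝ} (hB : IsCompact B) (hS : IsCompact S)
    (hlim : limsup (fun θ => ∫ x in Bᶜ, post f₁ f₂ y θ x) (cocompact ℝ) < 1) :
    ∃ δ > 0, ∀ θ, ∀ t ∈ S, δ ≤ gibbsTrans f₁ f₂ y θ t := by
  have hf₂0' : ∀ t, 0 ≤ f₂ t := fun t => (hf₂0 t).le
  have hpost : IsKernelDensity volume volume 1 (post f₁ f₂ y) :=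
    isKernelDensity_post hf₁0 hf₁ hf₂ hf₂0 hM
  obtain ⟨ε, hε, hεB⟩ :=
    exists_pos_forall_le_setIntegral_post hf₁0 hf₁ hf₂c hf₂ hf₂0 hM hB hlim
  obtain ⟨m, hm0, hm⟩ := exists_pos_forall_le_comp_sub hf₂c hf₂0 hB hS
  refine ⟨ε * m, mul_pos hε hm0, fun θ t ht => ?_⟩
  rw [gibbsTrans_eq_pushDensity_post]
  calc ε * m ≤ (∫ x in B, post f₁ f₂ y θ x) * m := mul_le_mul_of_nonneg_right (hεB θ) hm0.le
    _ ≤ pushDensity volume (fun x t => f₂ (x - t)) (post f₁ f₂ y θ) t :=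
      setIntegral_mul_le_integral_mul (hpost.nonneg θ) (hpost.integrable θ) (fun x => hf₂0' _)
        (integrable_mul_comp_sub (hpost.integrable θ) hf₂.aestronglyMeasurable
          (fun t => (abs_of_nonneg (hf₂0' t)).trans_le (hM t)) t)
        hB.measurableSet fun x hx => hm x hx t ht

end Gibbs

theorem ptip_implies_uniformly_ergodic_general (f₁ f₂ : ℝ → ℝ) (y : ℝ)
    (hf₂c : Continuous f₂) (hf₁nonneg : ∀ t, 0 ≤ f₁ t) (hf₂pos : ∀ t, 0 < f₂ t)
    (hf₂bdd : ∃ M, ∀ t, f₂ t ≤ M) (hf₁prob : ∫ t, f₁ t = 1) (hf₂prob : ∫ t, f₂ t = 1)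
    (hPTIP : ∃ k : ℝ,
      limsup (fun θ => ∫ x in {x : ℝ | k < |x|}, post f₁ f₂ y θ x) (cocompact ℝ) < 1) :
    ∃ M : ℝ, ∃ r : ℝ, 0 ≤ r ∧ r < 1 ∧
      ∀ θ₀ : ℝ, ∀ n : ℕ, 1 ≤ n →
        (∫ θ, |gibbsTransN f₁ f₂ y n θ₀ θ - cnorm f₁ f₂ y θ / (∫ θ', cnorm f₁ f₂ y θ')|) ≤
          M * r ^ n := by
  obtain ⟨M, hM⟩ := hf₂bdd
  obtain ⟨k, hk⟩ := hPTIP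
  have hf₁ : 0 < ∫ t, f₁ t := hf₁prob ▸ one_pos
  have hf₂ : Integrable f₂ := integrable_of_integral_eq_one hf₂prob
  have hp := isKernelDensity_gibbsTrans (y := y) hf₁nonneg hf₁ hf₂pos hf₂prob hM
  have hc := cnorm_pos (y := y) hf₁nonneg hf₁ hf₂.aestronglyMeasurable hf₂pos hM
  have hc1 : ∫ θ, cnorm f₁ f₂ y θ = 1 := by
    rw [integral_cnorm (.of_integral_ne_zero hf₁.ne') hf₂ fun t => (hf₂pos t).le, hf₁prob, hf₂prob,
      one_mul]
  have hinv := hp.pushDensity_eq_self_of_reversible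
    (cnorm_mul_gibbsTrans_comm fun θ => (hc θ).ne')
  have htail : {x : ℝ | k < |x|} = (Icc (-k) k)ᶜ := by ext x; simp [← abs_le]
  obtain ⟨δ, hδ0, hδ⟩ := exists_pos_forall_le_gibbsTrans hf₁nonneg hf₁ hf₂c hf₂ hf₂pos hM
    isCompact_Icc (isCompact_Icc (a := 0) (b := 1)) (htail ▸ hk)
  obtain ⟨r, hr0, hr1, hr⟩ := hp.uniform_ergodicity_of_forall_mem_le measurableSet_Icc (by simp)
    (by simp) hδ0 hδ (fun θ => (hc θ).le) hc1 hinv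
  refine ⟨2, r, hr0, hr1, fun θ₀ n hn => ?_⟩
  obtain ⟨n, rfl⟩ := Nat.exists_eq_add_of_le' hn
  simpa only [hc1, div_one, gibbsTransN_succ_eq_iterate] using hr θ₀ n

/-- if the centred parametrisation is PTIP, then the marginal Θ-chain of the
centred Gibbs sampler is uniformly ergodic (total variation distance from the stationary
law `Π`, with density `θ ↦ c_θ / C`, decays geometrically, uniformly in the start `θ₀`). -/
theorem ptip_implies_uniformly_ergodic (f₁ f₂ : ℝ → ℝ) (y : ℝ)
    (hf₁c : Continuous f₁) (hf₂c : Continuous f₂)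
    (hf₁pos : ∀ t, 0 < f₁ t) (hf₂pos : ∀ t, 0 < f₂ t)
    (hf₁bdd : ∃ M, ∀ t, f₁ t ≤ M) (hf₂bdd : ∃ M, ∀ t, f₂ t ≤ M)
    (hf₁sym : ∀ t, f₁ (-t) = f₁ t) (hf₂sym : ∀ t, f₂ (-t) = f₂ t)
    (hf₁prob : ∫ t, f₁ t = 1) (hf₂prob : ∫ t, f₂ t = 1)
    (hjint : ∀ θ, Integrable (fun x => fjoint f₁ f₂ y θ x))
    (hcpos : ∀ θ, 0 < cnorm f₁ f₂ y θ)
    (hCint : Integrable (fun θ => cnorm f₁ f₂ y θ))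
    (hPTIP : ∃ k > (0 : ℝ),
      limsup (fun θ => ∫ x in {x : ℝ | k < |x|}, post f₁ f₂ y θ x) (cocompact ℝ) < 1) :
    ∃ M : ℝ, ∃ r : ℝ, 0 ≤ r ∧ r < 1 ∧
      ∀ θ₀ : ℝ, ∀ n : ℕ, 1 ≤ n →
        (∫ θ, |gibbsTransN f₁ f₂ y n θ₀ θ - cnorm f₁ f₂ y θ / (∫ θ', cnorm f₁ f₂ y θ')|) ≤
          M * r ^ n := by
  exact ptip_implies_uniformly_ergodic_general f₁ f₂ y hf₂c (fun t => (hf₁pos t).le) hf₂pos hf₂bdd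
    hf₁prob hf₂prob (hPTIP.imp fun _ h => h.2)
end
end

section
/- Suppose the model is robust in data (RID): for every z ∈ ℝ, ∫_{(-∞, θ+z]} π(x | θ) dx → F₂(z) := ∫_{(-∞, z]} f₂(u) du as |θ| → ∞. Then the transition density of the marginal Θ-chain is random-walk-like in the tails: for every z ∈ ℝ, lim_{|θ₀| → ∞} p(θ₀, θ₀ + z) = ∫_ℝ f₂(u − z)·f₂(u) du, i.e. the limit is the self-convolution (f₂ ⋆ f₂)(z), which is a continuous, everywhere positive probability density symmetric about 0. -/
open MeasureTheory Filter Set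

noncomputable section

/-! If `X` has density `π(· | θ)`, then `p(θ, θ + z)` is the expectation of `f₂(X - θ - z)`.
Robustness in data says that the distribution functions of `X - θ` converge pointwise to that of
`f₂`; hence the laws converge weakly, and testing against the bounded continuous function
`f₂(· - z)` gives the limit `∫ f₂(u - z) f₂(u) du`. This is the convolution of `f₂` with its
reflection, from which continuity and total mass are read off. -/

open scoped Topology BoundedContinuousFunction Convolution

section WeakConvergence

theorem isCountablyGenerated_cocompact_of_atBot_atTop {α : Type*} [LinearOrder α]
    [TopologicalSpace α] [NoMaxOrder α] [NoMinOrder α] [OrderClosedTopology α] [CompactIccSpace α]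
    [(atBot : Filter α).IsCountablyGenerated] [(atTop : Filter α).IsCountablyGenerated] :
    (cocompact α).IsCountablyGenerated := by
  rw [cocompact_eq_atBot_atTop]
  infer_instance

theorem exists_Ioc_mem_nhds_subset {α : Type*} [TopologicalSpace α] [LinearOrder α]
    [OrderTopology α] [DenselyOrdered α] [NoMaxOrder α] [NoMinOrder α] {s : Set α} {x : α}
    (hs : s ∈ 𝓝 x) : ∃ a b, a < b ∧ Ioc a b ∈ 𝓝 x ∧ Ioc a b ⊆ s := by
  obtain ⟨⟨a, c⟩, ⟨hax, hxc⟩, hacs⟩ := (nhds_basis_Ioo x).mem_iff.1 hs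
  obtain ⟨b, hxb, hbc⟩ := exists_between hxc
  exact ⟨a, b, hax.trans hxb, Ioc_mem_nhds hax hxb, (Ioc_subset_Ioo_right hbc).trans hacs⟩

theorem measureReal_Ioc_eq_sub {α : Type*} [TopologicalSpace α] [LinearOrder α]
    [ClosedIicTopology α] [MeasurableSpace α] [OpensMeasurableSpace α] (μ : Measure α)
    [IsFiniteMeasure μ] {a b : α} (hab : a ≤ b) :
    μ.real (Ioc a b) = μ.real (Iic b) - μ.real (Iic a) := by
  rw [← measureReal_sdiff (Iic_subset_Iic.2 hab) measurableSet_Iic, Iic_sdiff_Iic]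

theorem tendsto_probabilityMeasure_of_forall_tendsto_Iic {ι α : Type*} [TopologicalSpace α]
    [LinearOrder α] [OrderTopology α] [SecondCountableTopology α] [DenselyOrdered α]
    [NoMaxOrder α] [NoMinOrder α] [MeasurableSpace α] [OpensMeasurableSpace α]
    {l : Filter ι} [l.IsCountablyGenerated] {μ : ι → ProbabilityMeasure α}
    {ν : ProbabilityMeasure α}
    (h : ∀ a, Tendsto (fun i ↦ (μ i : Measure α).real (Iic a)) l
      (𝓝 ((ν : Measure α).real (Iic a)))) :
    Tendsto μ l (𝓝 ν) := by
  refine (isPiSystem_Ioc id id).tendsto_probabilityMeasure_of_tendsto_of_mem ?_ ?_ ?_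
  · rintro _ ⟨a, b, -, rfl⟩
    exact measurableSet_Ioc
  · intro u hu x hx
    obtain ⟨a, b, hab, hmem, hsub⟩ := exists_Ioc_mem_nhds_subset (hu.mem_nhds hx)
    exact ⟨Ioc a b, ⟨a, b, hab, rfl⟩, hmem, hsub⟩
  · rintro _ ⟨a, b, hab : a < b, rfl⟩
    have hIoc : Tendsto (fun i ↦ (μ i : Measure α).real (Ioc a b)) l
        (𝓝 ((ν : Measure α).real (Ioc a b))) := by
      simpa only [measureReal_Ioc_eq_sub _ hab.le] using (h b).sub (h a)
    exact NNReal.tendsto_coe.1 hIoc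

end WeakConvergence

section Density

variable {α : Type*} [MeasurableSpace α] {μ : Measure α} {f : α → ℝ}

theorem measureReal_withDensity_ofReal (hf₀ : 0 ≤ᵐ[μ] f) (hf : AEStronglyMeasurable f μ)
    {s : Set α} (hs : MeasurableSet s) :
    (μ.withDensity fun x ↦ ENNReal.ofReal (f x)).real s = ∫ x in s, f x ∂μ := by
  rw [measureReal_def, withDensity_apply _ hs,
    integral_eq_lintegral_of_nonneg_ae (ae_restrict_of_ae hf₀) hf.restrict]

theorem isProbabilityMeasure_withDensity_ofReal (hf₀ : 0 ≤ᵐ[μ] f) (hf₁ : ∫ x, f x ∂μ = 1) :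
    IsProbabilityMeasure (μ.withDensity fun x ↦ ENNReal.ofReal (f x)) := by
  have hf : Integrable f μ := .of_integral_ne_zero (hf₁ ▸ one_ne_zero)
  rw [isProbabilityMeasure_iff_real,
    measureReal_withDensity_ofReal hf₀ hf.aestronglyMeasurable .univ, setIntegral_univ, hf₁]

theorem integral_withDensity_ofReal (hf₀ : 0 ≤ᵐ[μ] f) (hf : AEMeasurable f μ) (φ : α → ℝ) :
    ∫ x, φ x ∂(μ.withDensity fun x ↦ ENNReal.ofReal (f x)) = ∫ x, φ x * f x ∂μ := by
  rw [integral_withDensity_eq_integral_toReal_smul₀ hf.ennreal_ofReal (by simp)]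
  refine integral_congr_ae ?_
  filter_upwards [hf₀] with x hx
  rw [ENNReal.toReal_ofReal hx, smul_eq_mul, mul_comm]

theorem tendsto_integral_mul_of_forall_tendsto_setIntegral_Iic {ι : Type*} [TopologicalSpace α]
    [LinearOrder α] [OrderTopology α] [SecondCountableTopology α] [DenselyOrdered α]
    [NoMaxOrder α] [NoMinOrder α] [OpensMeasurableSpace α]
    {l : Filter ι} [l.IsCountablyGenerated] {g : ι → α → ℝ}
    (hg₀ : ∀ i, 0 ≤ᵐ[μ] g i) (hg₁ : ∀ i, ∫ x, g i x ∂μ = 1)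
    (hf₀ : 0 ≤ᵐ[μ] f) (hf₁ : ∫ x, f x ∂μ = 1)
    (hgf : ∀ a, Tendsto (fun i ↦ ∫ x in Iic a, g i x ∂μ) l (𝓝 (∫ x in Iic a, f x ∂μ)))
    (φ : α →ᵇ ℝ) :
    Tendsto (fun i ↦ ∫ x, φ x * g i x ∂μ) l (𝓝 (∫ x, φ x * f x ∂μ)) := by
  have hg (i : ι) : Integrable (g i) μ := .of_integral_ne_zero (hg₁ i ▸ one_ne_zero)
  have hf : Integrable f μ := .of_integral_ne_zero (hf₁ ▸ one_ne_zero)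
  let law (i : ι) : ProbabilityMeasure α :=
    ⟨_, isProbabilityMeasure_withDensity_ofReal (hg₀ i) (hg₁ i)⟩
  let limitLaw : ProbabilityMeasure α := ⟨_, isProbabilityMeasure_withDensity_ofReal hf₀ hf₁⟩
  have hlaw : Tendsto law l (𝓝 limitLaw) := by
    refine tendsto_probabilityMeasure_of_forall_tendsto_Iic fun a ↦ ?_
    simpa only [law, limitLaw, ProbabilityMeasure.coe_mk, measurableSet_Iic,
      measureReal_withDensity_ofReal (hg₀ _) (hg _).aestronglyMeasurable,
      measureReal_withDensity_ofReal hf₀ hf.aestronglyMeasurable] using hgf a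
  simpa only [law, limitLaw, ProbabilityMeasure.coe_mk,
    integral_withDensity_ofReal (hg₀ _) (hg _).aemeasurable,
    integral_withDensity_ofReal hf₀ hf.aemeasurable]
    using ProbabilityMeasure.tendsto_iff_forall_integral_tendsto.1 hlaw φ

end Density

section Autocorrelation

variable {G : Type*} [MeasurableSpace G]

/-- The autocorrelation `z ↦ ∫ f(u - z) f(u) dμ(u)` of a real function `f`. For a probability
density on `ℝ` it is the density of the difference of two independent variables with density `f`. -/
def autocorrelation [Sub G] (f : G → ℝ) (μ : Measure G) (z : G) : ℝ :=
  ∫ u, f (u - z) * f u ∂μ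

variable [AddGroup G] {f : G → ℝ} {μ : Measure G}

theorem autocorrelation_eq_convolution (f : G → ℝ) (μ : Measure G) :
    autocorrelation f μ = f ⋆[ContinuousLinearMap.mul ℝ ℝ, μ] fun u ↦ f (-u) := by
  ext z
  simp only [autocorrelation, convolution, ContinuousLinearMap.mul_apply', neg_sub, mul_comm]

theorem autocorrelation_neg [MeasurableAdd G] [μ.IsAddRightInvariant] (z : G) :
    autocorrelation f μ (-z) = autocorrelation f μ z := by
  unfold autocorrelation
  rw [← integral_sub_right_eq_self (fun u ↦ f (u - -z) * f u) z]
  simp only [sub_neg_eq_add, sub_add_cancel, mul_comm]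

theorem integral_autocorrelation [MeasurableAdd₂ G] [MeasurableNeg G] [SFinite μ]
    [μ.IsAddRightInvariant] [μ.IsNegInvariant] (hf : Integrable f μ) :
    ∫ z, autocorrelation f μ z ∂μ = (∫ u, f u ∂μ) ^ 2 := by
  rw [autocorrelation_eq_convolution, integral_convolution _ hf hf.comp_neg,
    integral_neg_eq_self, ContinuousLinearMap.mul_apply', sq]

variable [TopologicalSpace G] [IsTopologicalAddGroup G] [BorelSpace G]

theorem continuous_autocorrelation [FirstCountableTopology G] {C : ℝ} (hfi : Integrable f μ)
    (hfc : Continuous f) (hfC : ∀ u, ‖f u‖ ≤ C) : Continuous (autocorrelation f μ) := by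
  rw [autocorrelation_eq_convolution]
  have hbdd : BddAbove (range fun u ↦ ‖f (-u)‖) := ⟨C, forall_mem_range.2 fun u ↦ hfC (-u)⟩
  exact hbdd.continuous_convolution_right_of_integrable _ hfi (hfc.comp continuous_neg)

theorem autocorrelation_pos [NeZero μ] {C : ℝ} (hfi : Integrable f μ) (hfc : Continuous f)
    (hfC : ∀ u, ‖f u‖ ≤ C) (hf : ∀ u, 0 < f u) (z : G) : 0 < autocorrelation f μ z := by
  have hpos (u : G) : 0 < f (u - z) * f u := mul_pos (hf _) (hf _)
  have hint : Integrable (fun u ↦ f (u - z) * f u) μ :=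
    hfi.bdd_mul (hfc.comp (continuous_sub_right z)).aestronglyMeasurable (ae_of_all _ fun u ↦ hfC _)
  have hsupport : Function.support (fun u ↦ f (u - z) * f u) = univ :=
    Function.support_eq_univ fun u ↦ (hpos u).ne'
  rw [autocorrelation, integral_pos_iff_support_of_nonneg (fun u ↦ (hpos u).le) hint, hsupport]
  exact NeZero.pos _

end Autocorrelation

theorem setIntegral_Iic_add_left {G E : Type*} [AddCommGroup G] [PartialOrder G]
    [IsOrderedAddMonoid G] [MeasurableSpace G] [MeasurableAdd G] [NormedAddCommGroup E]
    [NormedSpace ℝ E] {μ : Measure G} [μ.IsAddRightInvariant] (f : G → E) (a b : G) :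
    ∫ x in Iic (a + b), f x ∂μ = ∫ x in Iic b, f (x + a) ∂μ := by
  rw [← (measurePreserving_add_right μ a).setIntegral_preimage_emb
    (measurableEmbedding_addRight a), preimage_add_const_Iic, add_sub_cancel_left]

section GibbsSampler

variable {f₁ f₂ : ℝ → ℝ} {y θ : ℝ}

theorem post_nonneg (hf₁ : ∀ t, 0 ≤ f₁ t) (hf₂ : ∀ t, 0 ≤ f₂ t) (x : ℝ) :
    0 ≤ post f₁ f₂ y θ x := by
  have hjoint (x : ℝ) : 0 ≤ fjoint f₁ f₂ y θ x := mul_nonneg (hf₁ _) (hf₂ _)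
  exact div_nonneg (hjoint x) (integral_nonneg hjoint)

theorem integral_post (hc : cnorm f₁ f₂ y θ ≠ 0) : ∫ x, post f₁ f₂ y θ x = 1 := by
  unfold post
  rw [integral_div]
  exact div_self hc

theorem gibbsTrans_add_eq_integral_post (f₁ f₂ : ℝ → ℝ) (y θ z : ℝ) :
    gibbsTrans f₁ f₂ y θ (θ + z) = ∫ u, f₂ (u - z) * post f₁ f₂ y θ (u + θ) := by
  unfold gibbsTrans
  rw [← integral_const_mul, ← integral_add_right_eq_self _ θ]
  congr with u
  rw [post, show u + θ - (θ + z) = u - z by ring]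
  ring

theorem tendsto_gibbsTrans_add {l : Filter ℝ} [l.IsCountablyGenerated] {C : ℝ}
    (hf₁ : ∀ t, 0 ≤ f₁ t) (hf₂ : ∀ t, 0 ≤ f₂ t) (hf₂c : Continuous f₂) (hf₂C : ∀ t, ‖f₂ t‖ ≤ C)
    (hf₂prob : ∫ t, f₂ t = 1) (hc : ∀ θ, 0 < cnorm f₁ f₂ y θ)
    (hRID : ∀ z, Tendsto (fun θ ↦ ∫ x in Iic (θ + z), post f₁ f₂ y θ x) l
      (𝓝 (∫ u in Iic z, f₂ u)))
    (z : ℝ) :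
    Tendsto (fun θ ↦ gibbsTrans f₁ f₂ y θ (θ + z)) l (𝓝 (autocorrelation f₂ volume z)) := by
  simp only [gibbsTrans_add_eq_integral_post]
  simp only [setIntegral_Iic_add_left] at hRID
  have hrecentred (θ : ℝ) : ∫ u, post f₁ f₂ y θ (u + θ) = 1 := by
    rw [integral_add_right_eq_self, integral_post (hc θ).ne']
  exact tendsto_integral_mul_of_forall_tendsto_setIntegral_Iic
    (fun θ ↦ ae_of_all _ fun u ↦ post_nonneg hf₁ hf₂ (u + θ)) hrecentred
    (ae_of_all _ hf₂) hf₂prob hRID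
    (.ofNormedAddCommGroup (fun u ↦ f₂ (u - z)) (by fun_prop) C fun u ↦ hf₂C (u - z))

theorem rid_implies_random_walk_like_general {l : Filter ℝ} [l.IsCountablyGenerated]
    (hf₁ : ∀ t, 0 ≤ f₁ t) (hf₂pos : ∀ t, 0 < f₂ t) (hf₂c : Continuous f₂)
    (hf₂bdd : ∃ M, ∀ t, f₂ t ≤ M) (hf₂prob : ∫ t, f₂ t = 1)
    (hc : ∀ θ, 0 < cnorm f₁ f₂ y θ)
    (hRID : ∀ z, Tendsto (fun θ ↦ ∫ x in Iic (θ + z), post f₁ f₂ y θ x) l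
      (𝓝 (∫ u in Iic z, f₂ u))) :
    (∀ z, Tendsto (fun θ ↦ gibbsTrans f₁ f₂ y θ (θ + z)) l
      (𝓝 (autocorrelation f₂ volume z))) ∧
    Continuous (autocorrelation f₂ volume) ∧
    (∀ z, 0 < autocorrelation f₂ volume z) ∧
    (∀ z, autocorrelation f₂ volume (-z) = autocorrelation f₂ volume z) ∧
    ∫ z, autocorrelation f₂ volume z = 1 := by
  obtain ⟨M, hM⟩ := hf₂bdd
  have hnorm (t : ℝ) : ‖f₂ t‖ ≤ M := (Real.norm_of_nonneg (hf₂pos t).le).trans_le (hM t)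
  have hint : Integrable f₂ := .of_integral_ne_zero (hf₂prob ▸ one_ne_zero)
  refine ⟨tendsto_gibbsTrans_add hf₁ (fun t ↦ (hf₂pos t).le) hf₂c hnorm hf₂prob hc hRID,
    continuous_autocorrelation hint hf₂c hnorm, autocorrelation_pos hint hf₂c hnorm hf₂pos,
    autocorrelation_neg, ?_⟩
  rw [integral_autocorrelation hint, hf₂prob, one_pow]

end GibbsSampler

/-- under RID, the transition density of the marginal Θ-chain is
random-walk-like in the tails, with limit the self-convolution `q(z) = ∫ f₂(u - z) f₂(u) du`,
a continuous, everywhere positive probability density symmetric about 0. -/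
theorem rid_implies_random_walk_like (f₁ f₂ : ℝ → ℝ) (y : ℝ)
    (hf₁c : Continuous f₁) (hf₂c : Continuous f₂)
    (hf₁pos : ∀ t, 0 < f₁ t) (hf₂pos : ∀ t, 0 < f₂ t)
    (hf₁bdd : ∃ M, ∀ t, f₁ t ≤ M) (hf₂bdd : ∃ M, ∀ t, f₂ t ≤ M)
    (hf₁sym : ∀ t, f₁ (-t) = f₁ t) (hf₂sym : ∀ t, f₂ (-t) = f₂ t)
    (hf₁prob : ∫ t, f₁ t = 1) (hf₂prob : ∫ t, f₂ t = 1)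
    (hjint : ∀ θ, Integrable (fun x => fjoint f₁ f₂ y θ x))
    (hcpos : ∀ θ, 0 < cnorm f₁ f₂ y θ)
    (hRID : ∀ z : ℝ,
      Tendsto (fun θ => ∫ x in Iic (θ + z), post f₁ f₂ y θ x) (cocompact ℝ)
        (nhds (∫ u in Iic z, f₂ u))) :
    (∀ z : ℝ,
      Tendsto (fun θ₀ => gibbsTrans f₁ f₂ y θ₀ (θ₀ + z)) (cocompact ℝ)
        (nhds (∫ u, f₂ (u - z) * f₂ u))) ∧
    Continuous (fun z => ∫ u, f₂ (u - z) * f₂ u) ∧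
    (∀ z : ℝ, 0 < ∫ u, f₂ (u - z) * f₂ u) ∧
    (∀ z : ℝ, (∫ u, f₂ (u - (-z)) * f₂ u) = ∫ u, f₂ (u - z) * f₂ u) ∧
    (∫ z, ∫ u, f₂ (u - z) * f₂ u) = 1 :=
  have := isCountablyGenerated_cocompact_of_atBot_atTop (α := ℝ)
  rid_implies_random_walk_like_general (fun t ↦ (hf₁pos t).le) hf₂pos hf₂c hf₂bdd hf₂prob hcpos hRID
end
end
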